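/- Consider a smooth solution of the Bianchi I Einstein–Vlasov system on [t₀,∞) with expanding initial data (H(t₀) < 0) and f₀ not identically zero. There exists ε₀ > 0 and a constant C > 0 such that if F(t₀) ≤ ε₀ and P(t₀) ≤ ε₀, then the solution exists for all t ≥ t₀ and the mean curvature satisfies H(t) = -2 t^{-1} (1 + O(t^{-1})) as t → ∞, i.e. |t H(t) + 2| ≤ C t^{-1} for all large t. -/

import Mathlib

/-!
The asymptotics hold for every expanding solution, whatever the initial anisotropy and momenta.
Put `V = √det g`, `y = -H V`, and let `e = V ρ`, `s = V tr S` be the total energy and total stress,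
so that `e` and `s` are integrals of `f₀` against functions of `|p|² = pᵀ g⁻¹ p`, with
`0 ≤ s ≤ e` and `e ≥ m N`, `N = ∫ f₀ > 0`. The evolution equations give `V' = y` and
`y' = 4π (3 e - s) ≥ 8π m N`; hence `H < 0` persists and `V` grows at least quadratically.

The key point (`BianchiIVlasov.rayleigh_grow`) is that for each fixed vector `v` the Rayleigh quotient
`-V k(v, v) / g(v, v)` is nondecreasing, with derivative at least `4π (e - s)`: by Cauchy–Schwarz the
terms quadratic in `k` have a sign. So if `r(t)` is a lower bound of `-V k` relative to `g` at the
initial time, then `r(t)` can be taken to increase at the rate `inf 4π (e - s)`, while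
`(|p|²)' ≤ -(2 r / V) |p|²`. This is used three times.

* With `r` a constant: since `1 / V` is integrable, all `|p|²` in the support of `f₀` stay bounded
  (`ReducedSystem.exists_q_le`).
* If `|p|² ≤ B`, then `e - s ≥ m² N / √(m² + B)` and `e ≤ √(m² + B) N`, so `r` grows linearly, `V` at
  most quadratically, and `|p|² = O(t ^ (-β))` for any `β < (4/3) m² / (m² + B)`
  (`ReducedSystem.exists_decay`). In particular `|p|² → 0` uniformly.
* The same step with `B` now small gives `|p|² = O(t ^ (-6/5))` (`ReducedSystem.exists_fast_decay`).

Therefore `y' = 12π m N + O(t ^ (-6/5))` has an integrable error, `y = 12π m N t + O(1)`,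
`V = 6π m N t² + O(t)`, and `H = -y / V = -(2 / t) (1 + O(1 / t))` (`ReducedSystem.late_time`).
-/

open Matrix MeasureTheory

attribute [local instance] Matrix.normedAddCommGroup Matrix.normedSpace

/-- The energy density `ρ` of collisionless matter with distribution function `f₀`
(in covariant momentum components) on a spatial metric `g`. -/
noncomputable def energyDensity (m : ℝ) (f₀ : (Fin 3 → ℝ) → ℝ)
    (g : Matrix (Fin 3) (Fin 3) ℝ) : ℝ :=
  ∫ p : Fin 3 → ℝ, f₀ p * Real.sqrt (m ^ 2 + p ⬝ᵥ g⁻¹.mulVec p) / Real.sqrt g.det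

/-- The spatial stress tensor `S_{ab}` (with lower indices). -/
noncomputable def stress (m : ℝ) (f₀ : (Fin 3 → ℝ) → ℝ)
    (g : Matrix (Fin 3) (Fin 3) ℝ) : Matrix (Fin 3) (Fin 3) ℝ :=
  Matrix.of fun a b => ∫ p : Fin 3 → ℝ,
    f₀ p * p a * p b / (Real.sqrt (m ^ 2 + p ⬝ᵥ g⁻¹.mulVec p) * Real.sqrt g.det)

/-- The mean curvature `H = tr (g⁻¹ k)`. -/
noncomputable def meanCurv (g k : Matrix (Fin 3) (Fin 3) ℝ) : ℝ := (g⁻¹ * k).trace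

/-- The shear `σ = k - (H/3) g`, the trace-free part of the second fundamental form. -/
noncomputable def shear (g k : Matrix (Fin 3) (Fin 3) ℝ) : Matrix (Fin 3) (Fin 3) ℝ :=
  k - (meanCurv g k / 3) • g

/-- The anisotropy `F = σ_{ab} σ^{ab} / H²`. -/
noncomputable def anisotropy (g k : Matrix (Fin 3) (Fin 3) ℝ) : ℝ :=
  (g⁻¹ * shear g k * g⁻¹ * shear g k).trace / meanCurv g k ^ 2

/-- `P`, the supremum of the absolute values of the momenta on the support of `f₀`. -/
noncomputable def momentumSup (f₀ : (Fin 3 → ℝ) → ℝ)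
    (g : Matrix (Fin 3) (Fin 3) ℝ) : ℝ :=
  sSup ((fun p => Real.sqrt (p ⬝ᵥ g⁻¹.mulVec p)) '' {p | f₀ p ≠ 0})

/-- A smooth solution of the Bianchi I Einstein–Vlasov system on `[t₀, ∞)`
(Gaussian time, zero cosmological constant, particle mass `m > 0`). -/
structure BianchiIVlasov (t₀ m : ℝ) (g k : ℝ → Matrix (Fin 3) (Fin 3) ℝ)
    (f₀ : (Fin 3 → ℝ) → ℝ) : Prop where
  m_pos : 0 < m
  g_smooth : ContDiffOn ℝ (⊤ : ℕ∞) g (Set.Ici t₀)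
  k_smooth : ContDiffOn ℝ (⊤ : ℕ∞) k (Set.Ici t₀)
  f₀_smooth : ContDiff ℝ (⊤ : ℕ∞) f₀
  f₀_nonneg : ∀ p, 0 ≤ f₀ p
  f₀_cpt : HasCompactSupport f₀
  g_posdef : ∀ t ≥ t₀, (g t).PosDef
  g_symm : ∀ t ≥ t₀, (g t).IsSymm
  k_symm : ∀ t ≥ t₀, (k t).IsSymm
  evol_g : ∀ t ≥ t₀, HasDerivWithinAt g (-(2 : ℝ) • k t) (Set.Ici t₀) t
  evol_k : ∀ t ≥ t₀, HasDerivWithinAt k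
    (meanCurv (g t) (k t) • k t - (2 : ℝ) • (k t * (g t)⁻¹ * k t)
      - (8 * Real.pi) • (stress m f₀ (g t)
          - (((g t)⁻¹ * stress m f₀ (g t)).trace / 2) • g t)
      - (4 * Real.pi * energyDensity m f₀ (g t)) • g t) (Set.Ici t₀) t
  constraint : ∀ t ≥ t₀,
    meanCurv (g t) (k t) ^ 2 - ((g t)⁻¹ * k t * (g t)⁻¹ * k t).trace
      = 16 * Real.pi * energyDensity m f₀ (g t)

/-! ### Calculus of matrix-valued functions -/

theorem hasDerivWithinAt_matrix_iff {A : ℝ → Matrix (Fin 3) (Fin 3) ℝ}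
    {A' : Matrix (Fin 3) (Fin 3) ℝ} {s : Set ℝ} {t : ℝ} :
    HasDerivWithinAt A A' s t ↔
      ∀ i j, HasDerivWithinAt (fun x => A x i j) (A' i j) s t := by
  exact (hasDerivWithinAt_pi (φ := A) (φ' := A')).trans (forall_congr' fun i => hasDerivWithinAt_pi)

theorem HasDerivWithinAt.matrixMul {A B : ℝ → Matrix (Fin 3) (Fin 3) ℝ}
    {A' B' : Matrix (Fin 3) (Fin 3) ℝ} {s : Set ℝ} {t : ℝ}
    (hA : HasDerivWithinAt A A' s t) (hB : HasDerivWithinAt B B' s t) :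
    HasDerivWithinAt (fun x => A x * B x) (A' * B t + A t * B') s t := by
  rw [hasDerivWithinAt_matrix_iff] at *
  intro i j
  simp only [Matrix.mul_apply, Matrix.add_apply, ← Finset.sum_add_distrib]
  exact HasDerivWithinAt.fun_sum fun l _ => (hA i l).mul (hB l j)

theorem HasDerivWithinAt.matrixTrace {A : ℝ → Matrix (Fin 3) (Fin 3) ℝ}
    {A' : Matrix (Fin 3) (Fin 3) ℝ} {s : Set ℝ} {t : ℝ}
    (hA : HasDerivWithinAt A A' s t) :
    HasDerivWithinAt (fun x => (A x).trace) A'.trace s t := by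
  rw [hasDerivWithinAt_matrix_iff] at hA
  simp only [Matrix.trace, Matrix.diag]
  exact HasDerivWithinAt.fun_sum fun l _ => hA l l

theorem HasDerivWithinAt.matrixQuad {A : ℝ → Matrix (Fin 3) (Fin 3) ℝ}
    {A' : Matrix (Fin 3) (Fin 3) ℝ} {s : Set ℝ} {t : ℝ}
    (hA : HasDerivWithinAt A A' s t) (v : Fin 3 → ℝ) :
    HasDerivWithinAt (fun x => v ⬝ᵥ (A x).mulVec v) (v ⬝ᵥ A'.mulVec v) s t := by
  rw [hasDerivWithinAt_matrix_iff] at hA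
  simp only [Matrix.mulVec, dotProduct]
  exact HasDerivWithinAt.fun_sum fun l _ =>
    (HasDerivWithinAt.fun_sum fun j _ => (hA l j).mul_const _).const_mul _

theorem HasDerivWithinAt.matrixInv {A : ℝ → Matrix (Fin 3) (Fin 3) ℝ}
    {A' : Matrix (Fin 3) (Fin 3) ℝ} {s : Set ℝ} {t : ℝ} (hts : t ∈ s)
    (hA : HasDerivWithinAt A A' s t) (hdet : ∀ x ∈ s, (A x).det ≠ 0) :
    HasDerivWithinAt (fun x => (A x)⁻¹) (-((A t)⁻¹ * A' * (A t)⁻¹)) s t := by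
  have hcont : Filter.Tendsto (fun x => (A x)⁻¹) (nhdsWithin t (s \ {t})) (nhds (A t)⁻¹) := by
    have h1 : ContinuousAt (Inv.inv : Matrix (Fin 3) (Fin 3) ℝ → _) (A t) := by
      apply continuousAt_matrix_inv
      have := continuousAt_inv₀ (hdet t hts)
      rwa [← Ring.inverse_eq_inv'] at this
    exact h1.tendsto.comp (hA.continuousWithinAt.tendsto.mono_left
      (nhdsWithin_mono _ Set.sdiff_subset))
  have hA' : Filter.Tendsto (slope A t) (nhdsWithin t (s \ {t})) (nhds A') :=
    hasDerivWithinAt_iff_tendsto_slope.1 hA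
  suffices Filter.Tendsto (slope (fun x => (A x)⁻¹) t) (nhdsWithin t (s \ {t}))
      (nhds (-((A t)⁻¹ * A' * (A t)⁻¹))) from hasDerivWithinAt_iff_tendsto_slope.2 this
  have h2 := ((hcont.mul hA').mul_const (A t)⁻¹).neg
  refine h2.congr' ?_
  filter_upwards [self_mem_nhdsWithin] with x hx
  have hx1 : IsUnit (A x).det := (hdet x hx.1).isUnit
  have ht1 : IsUnit (A t).det := (hdet t hts).isUnit
  simp only [slope_def_module, Matrix.mul_smul, Matrix.smul_mul, Matrix.mul_sub, Matrix.sub_mul,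
    Matrix.nonsing_inv_mul _ hx1, Matrix.mul_nonsing_inv_cancel_right _ _ ht1, Matrix.one_mul]
  rw [← smul_neg, neg_sub]

/-- Jacobi's formula, with the derivative written through the inverse. -/
theorem HasDerivWithinAt.matrixDet {A : ℝ → Matrix (Fin 3) (Fin 3) ℝ}
    {A' : Matrix (Fin 3) (Fin 3) ℝ} {s : Set ℝ} {t : ℝ}
    (hA : HasDerivWithinAt A A' s t) (hdet : (A t).det ≠ 0) :
    HasDerivWithinAt (fun x => (A x).det) ((A t).det * ((A t)⁻¹ * A').trace) s t := by
  have hadj : (A t).det * ((A t)⁻¹ * A').trace = ((A t).adjugate * A').trace := by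
    rw [Matrix.inv_def, Matrix.smul_mul, Matrix.trace_smul, smul_eq_mul,
      Ring.inverse_eq_inv', mul_inv_cancel_left₀ hdet]
  rw [hadj, Matrix.adjugate_fin_three]
  rw [hasDerivWithinAt_matrix_iff] at hA
  simp only [Matrix.det_fin_three]
  have h00 := hA 0 0
  have h01 := hA 0 1
  have h02 := hA 0 2
  have h10 := hA 1 0
  have h11 := hA 1 1
  have h12 := hA 1 2
  have h20 := hA 2 0
  have h21 := hA 2 1
  have h22 := hA 2 2
  refine ((((((((h00.mul h11).mul h22).sub ((h00.mul h12).mul h21)).sub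
    ((h01.mul h10).mul h22)).add ((h01.mul h12).mul h20)).add
    ((h02.mul h10).mul h21)).sub ((h02.mul h11).mul h20))).congr_deriv ?_
  simp [Matrix.trace_fin_three, Matrix.vecMul, dotProduct, Fin.sum_univ_three]
  ring

/-- Cauchy–Schwarz for the dual pair of quadratic forms `g⁻¹` and `g`. -/
theorem dotProduct_sq_le_inv_mul {g : Matrix (Fin 3) (Fin 3) ℝ} (hg : g.PosDef)
    (hs : g.IsSymm) (w v : Fin 3 → ℝ) :
    (w ⬝ᵥ v) ^ 2 ≤ (w ⬝ᵥ g⁻¹.mulVec w) * (v ⬝ᵥ g.mulVec v) := by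
  by_cases hv : v = 0
  · simp [hv]
  have hG : 0 < v ⬝ᵥ g.mulVec v := by simpa using hg.dotProduct_mulVec_pos hv
  set G := v ⬝ᵥ g.mulVec v with hGdef
  have hdet : IsUnit g.det := hg.det_pos.ne'.isUnit
  set c := (w ⬝ᵥ v) / G with hc
  have h0 : 0 ≤ (g⁻¹.mulVec w - c • v) ⬝ᵥ g.mulVec (g⁻¹.mulVec w - c • v) := by
    simpa using hg.posSemidef.dotProduct_mulVec_nonneg (g⁻¹.mulVec w - c • v)
  have e1 : g.mulVec (g⁻¹.mulVec w) = w := by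
    rw [Matrix.mulVec_mulVec, Matrix.mul_nonsing_inv _ hdet, Matrix.one_mulVec]
  have e2 : (g⁻¹.mulVec w) ⬝ᵥ g.mulVec v = w ⬝ᵥ v := by
    rw [Matrix.dotProduct_mulVec, ← Matrix.mulVec_transpose, hs.eq, e1]
  rw [Matrix.mulVec_sub, Matrix.mulVec_smul, e1, sub_dotProduct, dotProduct_sub, dotProduct_sub,
    smul_dotProduct, smul_dotProduct, dotProduct_smul, dotProduct_smul, e2, ← hGdef,
    dotProduct_comm (g⁻¹.mulVec w) w, dotProduct_comm v w] at h0
  simp only [smul_eq_mul] at h0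
  have h1 : c * G = w ⬝ᵥ v := by rw [hc]; field_simp
  have h2 : (w ⬝ᵥ v) ^ 2 = c * (w ⬝ᵥ v) * G := by rw [← h1]; ring
  rw [h2]
  apply mul_le_mul_of_nonneg_right _ hG.le
  rw [h1] at h0
  linarith

/-! ### The matter terms -/

section Integrals

variable {m : ℝ} {f₀ : (Fin 3 → ℝ) → ℝ} {g : Matrix (Fin 3) (Fin 3) ℝ}

theorem continuous_quad (M : Matrix (Fin 3) (Fin 3) ℝ) :
    Continuous fun p : Fin 3 → ℝ => p ⬝ᵥ M.mulVec p :=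
  continuous_id.dotProduct (continuous_const.matrix_mulVec continuous_id)

theorem quad_inv_nonneg (hg : g.PosDef) (p : Fin 3 → ℝ) : 0 ≤ p ⬝ᵥ g⁻¹.mulVec p := by
  simpa using hg.inv.posSemidef.dotProduct_mulVec_nonneg p

theorem energy_pos (hm : 0 < m) (hg : g.PosDef) (p : Fin 3 → ℝ) :
    0 < √(m ^ 2 + p ⬝ᵥ g⁻¹.mulVec p) :=
  Real.sqrt_pos.2 (by have := quad_inv_nonneg hg p; positivity)

theorem continuous_energy : Continuous fun p : Fin 3 → ℝ => √(m ^ 2 + p ⬝ᵥ g⁻¹.mulVec p) :=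
  Real.continuous_sqrt.comp (continuous_const.add (continuous_quad _))

theorem integrable_mul (hf : Continuous f₀) (hc : HasCompactSupport f₀) {φ : (Fin 3 → ℝ) → ℝ}
    (hφ : Continuous φ) : Integrable fun p => f₀ p * φ p :=
  (hf.mul hφ).integrable_of_hasCompactSupport hc.mul_right

theorem integral_mul_mono (hf : Continuous f₀) (hc : HasCompactSupport f₀) (h0 : ∀ p, 0 ≤ f₀ p)
    {φ ψ : (Fin 3 → ℝ) → ℝ} (hφ : Continuous φ) (hψ : Continuous ψ)
    (hle : ∀ p, f₀ p ≠ 0 → φ p ≤ ψ p) : ∫ p, f₀ p * φ p ≤ ∫ p, f₀ p * ψ p := by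
  refine integral_mono (integrable_mul hf hc hφ) (integrable_mul hf hc hψ) fun p => ?_
  by_cases hp : f₀ p = 0
  · simp [hp]
  · exact mul_le_mul_of_nonneg_left (hle p hp) (h0 p)

theorem integral_mul_const' (c : ℝ) : ∫ p, f₀ p * c = c * ∫ p, f₀ p := by
  rw [integral_mul_const, mul_comm]

/-- `V ρ`, the total energy. -/
noncomputable def totalEnergy (m : ℝ) (f₀ : (Fin 3 → ℝ) → ℝ)
    (g : Matrix (Fin 3) (Fin 3) ℝ) : ℝ :=
  ∫ p : Fin 3 → ℝ, f₀ p * √(m ^ 2 + p ⬝ᵥ g⁻¹.mulVec p)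

/-- `V tr S`, three times the pressure integrated over a unit coordinate cell. -/
noncomputable def totalStress (m : ℝ) (f₀ : (Fin 3 → ℝ) → ℝ)
    (g : Matrix (Fin 3) (Fin 3) ℝ) : ℝ :=
  ∫ p : Fin 3 → ℝ, f₀ p * (p ⬝ᵥ g⁻¹.mulVec p / √(m ^ 2 + p ⬝ᵥ g⁻¹.mulVec p))

theorem energyDensity_eq : energyDensity m f₀ g = totalEnergy m f₀ g / √g.det :=
  integral_div _ _

theorem trace_mul_stress (hm : 0 < m) (hf : Continuous f₀) (hc : HasCompactSupport f₀)
    (hg : g.PosDef) (M : Matrix (Fin 3) (Fin 3) ℝ) :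
    (M * stress m f₀ g).trace
      = (∫ p, f₀ p * (p ⬝ᵥ M.mulVec p / √(m ^ 2 + p ⬝ᵥ g⁻¹.mulVec p))) / √g.det := by
  have hint : ∀ a b : Fin 3, Integrable fun p : Fin 3 → ℝ =>
      M a b * (f₀ p * p b * p a / (√(m ^ 2 + p ⬝ᵥ g⁻¹.mulVec p) * √g.det)) := by
    intro a b
    have := (integrable_mul hf hc (φ := fun p => p b * p a / √(m ^ 2 + p ⬝ᵥ g⁻¹.mulVec p))
      (((continuous_apply b).mul (continuous_apply a)).div continuous_energy
        fun p => (energy_pos hm hg p).ne')).const_mul (M a b / √g.det)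
    refine this.congr (Filter.Eventually.of_forall fun p => ?_)
    simp only [div_eq_mul_inv, mul_inv]
    ring
  simp only [Matrix.trace, Matrix.diag, Matrix.mul_apply, stress, Matrix.of_apply]
  simp_rw [← integral_const_mul]
  rw [← integral_div]
  simp_rw [← integral_finsetSum Finset.univ (fun b _ => hint _ b)]
  rw [← integral_finsetSum Finset.univ (fun a _ => integrable_finsetSum _ fun b _ => hint a b)]
  refine integral_congr_ae (Filter.Eventually.of_forall fun p => ?_)
  simp only [dotProduct, Matrix.mulVec, Finset.mul_sum, Finset.sum_div]
  refine Finset.sum_congr rfl fun a _ => Finset.sum_congr rfl fun b _ => ?_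
  simp only [div_eq_mul_inv, mul_inv]
  ring

theorem trace_inv_mul_stress (hm : 0 < m) (hf : Continuous f₀) (hc : HasCompactSupport f₀)
    (hg : g.PosDef) : (g⁻¹ * stress m f₀ g).trace = totalStress m f₀ g / √g.det :=
  trace_mul_stress hm hf hc hg _

theorem stress_quad_nonneg (hm : 0 < m) (hf : Continuous f₀) (hc : HasCompactSupport f₀)
    (h0 : ∀ p, 0 ≤ f₀ p) (hg : g.PosDef) (v : Fin 3 → ℝ) :
    0 ≤ v ⬝ᵥ (stress m f₀ g).mulVec v := by
  have e1 : v ⬝ᵥ (stress m f₀ g).mulVec v = (vecMulVec v v * stress m f₀ g).trace := by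
    simp only [Matrix.trace, Matrix.diag, Matrix.mul_apply, vecMulVec_apply, dotProduct,
      Matrix.mulVec, Finset.mul_sum]
    rw [Finset.sum_comm]
    exact Finset.sum_congr rfl fun a _ => Finset.sum_congr rfl fun b _ => by ring
  rw [e1, trace_mul_stress hm hf hc hg]
  refine div_nonneg (integral_nonneg fun p => mul_nonneg (h0 p) (div_nonneg ?_
    (Real.sqrt_nonneg _))) (Real.sqrt_nonneg _)
  have : p ⬝ᵥ (vecMulVec v v).mulVec p = (p ⬝ᵥ v) ^ 2 := by
    simp [Matrix.vecMulVec_mulVec, dotProduct_comm v p, sq]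
  rw [this]
  positivity

theorem continuous_stressIntegrand (hm : 0 < m) (hg : g.PosDef) :
    Continuous fun p : Fin 3 → ℝ => p ⬝ᵥ g⁻¹.mulVec p / √(m ^ 2 + p ⬝ᵥ g⁻¹.mulVec p) :=
  (continuous_quad _).div continuous_energy fun p => (energy_pos hm hg p).ne'

theorem mul_le_totalEnergy (hm : 0 < m) (hf : Continuous f₀) (hc : HasCompactSupport f₀)
    (h0 : ∀ p, 0 ≤ f₀ p) (hg : g.PosDef) : m * ∫ p, f₀ p ≤ totalEnergy m f₀ g := by
  rw [← integral_mul_const']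
  refine integral_mul_mono hf hc h0 continuous_const continuous_energy fun p _ => ?_
  exact Real.le_sqrt_of_sq_le (by linarith [quad_inv_nonneg hg p])

theorem totalStress_nonneg (h0 : ∀ p, 0 ≤ f₀ p) (hg : g.PosDef) : 0 ≤ totalStress m f₀ g :=
  integral_nonneg fun p => mul_nonneg (h0 p)
    (div_nonneg (quad_inv_nonneg hg p) (Real.sqrt_nonneg _))

theorem totalStress_le_totalEnergy (hm : 0 < m) (hf : Continuous f₀) (hc : HasCompactSupport f₀)
    (h0 : ∀ p, 0 ≤ f₀ p) (hg : g.PosDef) : totalStress m f₀ g ≤ totalEnergy m f₀ g := by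
  refine integral_mul_mono hf hc h0 (continuous_stressIntegrand hm hg) continuous_energy
    fun p _ => ?_
  have hq := quad_inv_nonneg hg p
  rw [div_le_iff₀ (energy_pos hm hg p), Real.mul_self_sqrt (by positivity)]
  nlinarith

theorem totalEnergy_le (hf : Continuous f₀) (hc : HasCompactSupport f₀)
    (h0 : ∀ p, 0 ≤ f₀ p) {B : ℝ} (hB : ∀ p, f₀ p ≠ 0 → p ⬝ᵥ g⁻¹.mulVec p ≤ B) :
    totalEnergy m f₀ g ≤ √(m ^ 2 + B) * ∫ p, f₀ p := by
  rw [← integral_mul_const']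
  refine integral_mul_mono hf hc h0 continuous_energy continuous_const fun p hp => ?_
  exact Real.sqrt_le_sqrt (by linarith [hB p hp])

theorem totalStress_le (hm : 0 < m) (hf : Continuous f₀) (hc : HasCompactSupport f₀)
    (h0 : ∀ p, 0 ≤ f₀ p) (hg : g.PosDef) {B : ℝ} (hB : ∀ p, f₀ p ≠ 0 → p ⬝ᵥ g⁻¹.mulVec p ≤ B) :
    totalStress m f₀ g ≤ B / m * ∫ p, f₀ p := by
  rw [← integral_mul_const']
  refine integral_mul_mono hf hc h0 (continuous_stressIntegrand hm hg) continuous_const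
    fun p hp => ?_
  have hq := quad_inv_nonneg hg p
  have hqB := hB p hp
  exact div_le_div₀ (hq.trans hqB) hqB hm
    (Real.le_sqrt_of_sq_le (by linarith [quad_inv_nonneg hg p]))

theorem le_totalEnergy_sub (hm : 0 < m) (hf : Continuous f₀) (hc : HasCompactSupport f₀)
    (h0 : ∀ p, 0 ≤ f₀ p) (hg : g.PosDef) {B : ℝ} (hB : ∀ p, f₀ p ≠ 0 → p ⬝ᵥ g⁻¹.mulVec p ≤ B) :
    m ^ 2 / √(m ^ 2 + B) * ∫ p, f₀ p ≤ totalEnergy m f₀ g - totalStress m f₀ g := by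
  rw [← integral_mul_const', totalEnergy, totalStress, ← integral_sub
    (integrable_mul hf hc continuous_energy)
    (integrable_mul hf hc (continuous_stressIntegrand hm hg))]
  simp_rw [← mul_sub]
  refine integral_mul_mono hf hc h0 continuous_const
    (continuous_energy.sub (continuous_stressIntegrand hm hg)) fun p hp => ?_
  have hq := quad_inv_nonneg hg p
  have hE := energy_pos hm hg p
  have e1 : √(m ^ 2 + p ⬝ᵥ g⁻¹.mulVec p) - p ⬝ᵥ g⁻¹.mulVec p / √(m ^ 2 + p ⬝ᵥ g⁻¹.mulVec p)
      = m ^ 2 / √(m ^ 2 + p ⬝ᵥ g⁻¹.mulVec p) := by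
    rw [eq_div_iff hE.ne', sub_mul, div_mul_cancel₀ _ hE.ne', Real.mul_self_sqrt (by positivity)]
    ring
  rw [e1]
  exact div_le_div_of_nonneg_left (sq_nonneg m) hE (Real.sqrt_le_sqrt (by linarith [hB p hp]))

end Integrals

/-! ### The reduced system of scalar inequalities -/

/-- Comparison principle on a half-line. -/
theorem le_of_derivWithin_le {f f' h h' : ℝ → ℝ} {a : ℝ}
    (hf : ∀ t ≥ a, HasDerivWithinAt f (f' t) (Set.Ici a) t)
    (hh : ∀ t ≥ a, HasDerivWithinAt h (h' t) (Set.Ici a) t)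
    (hle : ∀ t ≥ a, f' t ≤ h' t) (ha : f a ≤ h a) : ∀ t ≥ a, f t ≤ h t := by
  have hd : ∀ t ≥ a, HasDerivWithinAt (fun x => h x - f x) (h' t - f' t) (Set.Ici a) t :=
    fun t ht => (hh t ht).sub (hf t ht)
  have hint : ∀ t, a < t → HasDerivAt (fun x => h x - f x) (h' t - f' t) t :=
    fun t ht => (hd t ht.le).hasDerivAt (Ici_mem_nhds ht)
  have hm : MonotoneOn (fun x => h x - f x) (Set.Ici a) := by
    refine monotoneOn_of_deriv_nonneg (convex_Ici a)
      (fun t ht => (hd t ht).continuousWithinAt) ?_ ?_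
    · intro t ht
      rw [interior_Ici] at ht
      exact (hint t ht).differentiableAt.differentiableWithinAt
    · intro t ht
      rw [interior_Ici] at ht
      rw [(hint t ht).deriv]
      linarith [hle t (le_of_lt ht)]
  intro t ht
  have := hm Set.self_mem_Ici (Set.mem_Ici.2 ht) ht
  simp only at this
  linarith

theorem exists_quadratic_nonneg {a : ℝ} (ha : 0 < a) (b c : ℝ) :
    ∃ U ≥ (0 : ℝ), ∀ u ≥ U, 0 ≤ a * u ^ 2 + b * u + c := by
  refine ⟨max 1 ((|b| + |c|) / a), le_max_of_le_left zero_le_one, fun u hu => ?_⟩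
  have h1 : 1 ≤ u := (le_max_left _ _).trans hu
  have h2 : (|b| + |c|) / a ≤ u := (le_max_right _ _).trans hu
  rw [div_le_iff₀ ha] at h2
  have h3 : (|b| + |c|) * u ≤ u * a * u := mul_le_mul_of_nonneg_right h2 (by linarith)
  have h4 : -|b| * u ≤ b * u := mul_le_mul_of_nonneg_right (neg_abs_le b) (by linarith)
  have h5 : |c| ≤ |c| * u := le_mul_of_one_le_right (abs_nonneg c) h1
  nlinarith [neg_abs_le c]

/-- The scalar inequalities satisfied by an expanding solution, which already determine its
late-time behaviour. Here `V = √det g` and `y = -H V`; `e` and `s` are `V ρ` and `V tr S`; `q p` is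
`|p|²` for a momentum `p` in the support of `f₀` (the index set `ι`), with derivative `q' p`; `N` is
the total particle number `∫ f₀`; and `L t r` says that `r • g ≤ -V • k` at time `t`. -/
structure ReducedSystem {ι : Type*} (t₀ m N : ℝ) (V y e s : ℝ → ℝ) (q q' : ι → ℝ → ℝ)
    (L : ℝ → ℝ → Prop) : Prop where
  m_pos : 0 < m
  N_pos : 0 < N
  V_pos : ∀ t ≥ t₀, 0 < V t
  y_pos : 0 < y t₀
  deriv_V : ∀ t ≥ t₀, HasDerivWithinAt V (y t) (Set.Ici t₀) t
  deriv_y : ∀ t ≥ t₀, HasDerivWithinAt y (4 * Real.pi * (3 * e t - s t)) (Set.Ici t₀) t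
  deriv_q : ∀ p, ∀ t ≥ t₀, HasDerivWithinAt (q p) (q' p t) (Set.Ici t₀) t
  q_nonneg : ∀ p, ∀ t ≥ t₀, 0 ≤ q p t
  q_bdd : ∃ B, 0 ≤ B ∧ ∀ p, q p t₀ ≤ B
  e_ge : ∀ t ≥ t₀, m * N ≤ e t
  s_nonneg : ∀ t ≥ t₀, 0 ≤ s t
  s_le_e : ∀ t ≥ t₀, s t ≤ e t
  e_le_sqrt : ∀ t ≥ t₀, ∀ B, 0 ≤ B → (∀ p, q p t ≤ B) → e t ≤ √(m ^ 2 + B) * N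
  sub_ge : ∀ t ≥ t₀, ∀ B, 0 ≤ B → (∀ p, q p t ≤ B) → m ^ 2 / √(m ^ 2 + B) * N ≤ e t - s t
  s_le : ∀ t ≥ t₀, ∀ B, 0 ≤ B → (∀ p, q p t ≤ B) → s t ≤ B / m * N
  L_init : ∃ r, L t₀ r
  L_grow : ∀ T ≥ t₀, ∀ r d, L T r → (∀ t ≥ T, d ≤ 4 * Real.pi * (e t - s t)) →
    ∀ t ≥ T, L t (r + d * (t - T))
  q'_le : ∀ p, ∀ t ≥ t₀, ∀ r, L t r → q' p t ≤ -(2 / V t * r * q p t)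

namespace ReducedSystem

variable {ι : Type*} {t₀ m N : ℝ} {V y e s : ℝ → ℝ} {q q' : ι → ℝ → ℝ} {L : ℝ → ℝ → Prop}

theorem exists_L (h : ReducedSystem t₀ m N V y e s q q' L) : ∃ r, ∀ t ≥ t₀, L t r := by
  obtain ⟨r, hr⟩ := h.L_init
  refine ⟨r, fun t ht => ?_⟩
  have := h.L_grow t₀ le_rfl r 0 hr
    (fun t ht => mul_nonneg (by positivity) (by linarith [h.s_le_e t ht])) t ht
  simpa using this

theorem exists_V_ge (h : ReducedSystem t₀ m N V y e s q q' L) :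
    ∃ c > 0, ∀ t ≥ t₀, c * (1 + (t - t₀)) ^ 2 ≤ V t := by
  have hmN := mul_pos h.m_pos h.N_pos
  have hpi := Real.pi_pos
  set b := 8 * Real.pi * (m * N) with hb
  have hbpos : 0 < b := by positivity
  have hy : ∀ t ≥ t₀, y t₀ + b * (t - t₀) ≤ y t := by
    refine le_of_derivWithin_le (f' := fun _ => b) (fun t _ => ?_) h.deriv_y (fun t ht => ?_)
      (by simp)
    · exact ((((hasDerivAt_id t).sub_const t₀).const_mul b).const_add (y t₀)).hasDerivWithinAt.congr_deriv
        (by simp)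
    · have h1 := h.e_ge t ht
      have h2 := h.s_le_e t ht
      rw [hb]
      nlinarith
  have hV : ∀ t ≥ t₀, V t₀ + (y t₀ * (t - t₀) + b / 2 * (t - t₀) ^ 2) ≤ V t := by
    refine le_of_derivWithin_le (f' := fun t => y t₀ + b * (t - t₀)) (fun t _ => ?_) h.deriv_V hy
      (by simp)
    have h1 := (hasDerivAt_id t).sub_const t₀
    exact (((h1.const_mul (y t₀)).add ((h1.pow 2).const_mul (b / 2))).const_add
      (V t₀)).hasDerivWithinAt.congr_deriv (by simp; ring)
  refine ⟨min (V t₀) (min (y t₀ / 2) (b / 2)), ?_, fun t ht => ?_⟩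
  · have := h.V_pos t₀ le_rfl
    have := h.y_pos
    positivity
  · refine le_trans ?_ (hV t ht)
    set c := min (V t₀) (min (y t₀ / 2) (b / 2))
    have c1 : c ≤ V t₀ := min_le_left _ _
    have c2 : c ≤ y t₀ / 2 := (min_le_right _ _).trans (min_le_left _ _)
    have c3 : c ≤ b / 2 := (min_le_right _ _).trans (min_le_right _ _)
    have hu : 0 ≤ t - t₀ := by linarith
    nlinarith [mul_le_mul_of_nonneg_right c2 hu, mul_le_mul_of_nonneg_right c3 (sq_nonneg (t - t₀))]

/-- Momenta stay bounded: their logarithmic growth rate is `O(1 / V)`, which is integrable since `V`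
grows at least quadratically. -/
theorem exists_q_le (h : ReducedSystem t₀ m N V y e s q q' L) :
    ∃ B, 0 ≤ B ∧ ∀ t ≥ t₀, ∀ p, q p t ≤ B := by
  obtain ⟨c, hc, hV⟩ := h.exists_V_ge
  obtain ⟨r, hr⟩ := h.exists_L
  obtain ⟨B, hB, hqB⟩ := h.q_bdd
  set κ := 2 * |r| / c with hκ
  have hκ0 : 0 ≤ κ := by positivity
  refine ⟨B * Real.exp κ, by positivity, fun t ht p => ?_⟩
  have hpos : ∀ x ≥ t₀, 0 < 1 + (x - t₀) := fun x hx => by linarith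
  have key : ∀ x ≥ t₀, q p x * Real.exp (κ / (1 + (x - t₀))) ≤ B * Real.exp κ := by
    refine le_of_derivWithin_le (h' := fun _ => 0)
      (f' := fun x => q' p x * Real.exp (κ / (1 + (x - t₀)))
        + q p x * (Real.exp (κ / (1 + (x - t₀))) * (-κ / (1 + (x - t₀)) ^ 2)))
      (fun x hx => ?_) (fun x _ => hasDerivWithinAt_const _ _ _) (fun x hx => ?_) ?_
    · have h1 : HasDerivAt (fun x => κ / (1 + (x - t₀))) (-κ / (1 + (x - t₀)) ^ 2) x := by
        have h2 : HasDerivAt (fun x => 1 + (x - t₀)) 1 x :=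
          ((hasDerivAt_id x).sub_const t₀).const_add 1
        exact ((hasDerivAt_const x κ).div h2 (hpos x hx).ne').congr_deriv (by simp)
      exact (h.deriv_q p x hx).mul h1.exp.hasDerivWithinAt
    · have h1 := h.q'_le p x hx r (hr x hx)
      have h2 := h.q_nonneg p x hx
      have h3 := hpos x hx
      have h4 : -(2 / V x * r) ≤ κ / (1 + (x - t₀)) ^ 2 := by
        have hVx := h.V_pos x hx
        calc -(2 / V x * r) = 2 * (-r) / V x := by ring
          _ ≤ 2 * |r| / V x := by gcongr; exact neg_le_abs r
          _ ≤ 2 * |r| / (c * (1 + (x - t₀)) ^ 2) := by gcongr; exact hV x hx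
          _ = κ / (1 + (x - t₀)) ^ 2 := by rw [hκ]; field_simp
      have h5 : q' p x ≤ κ / (1 + (x - t₀)) ^ 2 * q p x := by
        nlinarith [mul_le_mul_of_nonneg_right h4 h2]
      have h6 := Real.exp_pos (κ / (1 + (x - t₀)))
      have : q' p x * Real.exp (κ / (1 + (x - t₀)))
        + q p x * (Real.exp (κ / (1 + (x - t₀))) * (-κ / (1 + (x - t₀)) ^ 2))
        = (q' p x - κ / (1 + (x - t₀)) ^ 2 * q p x) * Real.exp (κ / (1 + (x - t₀))) := by ring
      rw [this]
      exact mul_nonpos_of_nonpos_of_nonneg (by linarith) h6.le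
    · simp only [sub_self, add_zero, div_one]
      gcongr
      exact hqB p
  refine le_trans ?_ (key t ht)
  have h3 := hpos t ht
  exact le_mul_of_one_le_right (h.q_nonneg p t ht) (Real.one_le_exp (by positivity))

/-- A bound `B` on all `|p|²` forces the decay rate `t ^ (-β)` for every `β` below
`(4/3) m² / (m² + B)`: `-V k` is eventually at least `~ 4π m² N t / √(m² + B)` relative to `g`, while
`V` is at most `~ 6π N √(m² + B) t²`. -/
theorem exists_decay (h : ReducedSystem t₀ m N V y e s q q' L) {T B β : ℝ} (hT : t₀ ≤ T)
    (hT1 : 1 ≤ T) (hB : 0 ≤ B) (hqB : ∀ t ≥ T, ∀ p, q p t ≤ B)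
    (hβ : β < 4 / 3 * (m ^ 2 / (m ^ 2 + B))) (hβ0 : 0 < β) :
    ∃ C ≥ 0, ∃ T' ≥ T, ∀ t ≥ T', ∀ p, q p t ≤ C * t ^ (-β) := by
  have hm := h.m_pos
  have hN := h.N_pos
  have hpi := Real.pi_pos
  have hE2 : √(m ^ 2 + B) ^ 2 = m ^ 2 + B := Real.sq_sqrt (by positivity)
  set E := √(m ^ 2 + B) with hE
  have hE0 : 0 < E := Real.sqrt_pos.2 (by positivity)
  obtain ⟨r, hr⟩ := h.exists_L
  set d := 4 * Real.pi * (m ^ 2 / E * N) with hd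
  set b := 12 * Real.pi * (E * N) with hb
  have hL : ∀ t ≥ T, L t (r + d * (t - T)) := by
    refine h.L_grow T hT r d (hr T hT) fun t ht => ?_
    exact mul_le_mul_of_nonneg_left (h.sub_ge t (hT.trans ht) B hB (hqB t ht)) (by positivity)
  have hsub : Set.Ici T ⊆ Set.Ici t₀ := Set.Ici_subset_Ici.2 hT
  have hy : ∀ t ≥ T, y t ≤ y T + b * (t - T) := by
    refine le_of_derivWithin_le (h' := fun _ => b)
      (fun t ht => (h.deriv_y t (hT.trans ht)).mono hsub) (fun t _ => ?_) (fun t ht => ?_) (by simp)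
    · exact ((((hasDerivAt_id t).sub_const T).const_mul b).const_add
        (y T)).hasDerivWithinAt.congr_deriv (by simp)
    · have h1 := h.e_le_sqrt t (hT.trans ht) B hB (hqB t ht)
      have h2 := h.s_nonneg t (hT.trans ht)
      rw [hb]
      nlinarith
  have hV : ∀ t ≥ T, V t ≤ V T + (y T * (t - T) + b / 2 * (t - T) ^ 2) := by
    refine le_of_derivWithin_le (h' := fun t => y T + b * (t - T))
      (fun t ht => (h.deriv_V t (hT.trans ht)).mono hsub) (fun t _ => ?_) hy (by simp)
    have h1 := (hasDerivAt_id t).sub_const T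
    exact (((h1.const_mul (y T)).add ((h1.pow 2).const_mul (b / 2))).const_add
      (V T)).hasDerivWithinAt.congr_deriv (by simp; ring)
  have hlead : 0 < 2 * d - β * (b / 2) := by
    have h1 : β * E ^ 2 < 4 / 3 * m ^ 2 := by
      rw [hE2]
      have := mul_lt_mul_of_pos_right hβ (show 0 < m ^ 2 + B by positivity)
      rwa [mul_assoc, div_mul_cancel₀ _ (by positivity)] at this
    have h2 : 2 * d - β * (b / 2) = 6 * Real.pi * N / E * (4 / 3 * m ^ 2 - β * E ^ 2) := by
      rw [hd, hb]; field_simp; ring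
    rw [h2]
    exact mul_pos (by positivity) (by linarith)
  obtain ⟨U, hU0, hU⟩ := exists_quadratic_nonneg hlead (2 * r + 2 * d * T - β * y T)
    (2 * r * T - β * V T)
  have hrate : ∀ t ≥ T + U, β * V t ≤ 2 * (r + d * (t - T)) * t := by
    intro t ht
    have h1 := hU (t - T) (by linarith)
    have h2 := mul_le_mul_of_nonneg_left (hV t (by linarith)) hβ0.le
    nlinarith
  have hT'0 : 0 < T + U := by linarith
  refine ⟨B * (T + U) ^ β, by positivity, T + U, by linarith, fun t ht p => ?_⟩
  have hsub' : Set.Ici (T + U) ⊆ Set.Ici t₀ := Set.Ici_subset_Ici.2 (by linarith)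
  have key : ∀ x ≥ T + U, q p x * x ^ β ≤ B * (T + U) ^ β := by
    refine le_of_derivWithin_le (h' := fun _ => 0)
      (f' := fun x => q' p x * x ^ β + q p x * (β * x ^ (β - 1)))
      (fun x hx => ?_) (fun x _ => hasDerivWithinAt_const _ _ _) (fun x hx => ?_) ?_
    · have hx0 : 0 < x := by linarith
      exact ((h.deriv_q p x (by linarith)).mono hsub').mul
        (Real.hasDerivAt_rpow_const (Or.inl hx0.ne')).hasDerivWithinAt
    · have hx0 : 0 < x := by linarith
      have hxt : x ≥ t₀ := by linarith
      have hVx := h.V_pos x hxt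
      have h1 := h.q'_le p x hxt _ (hL x (by linarith))
      have h2 := h.q_nonneg p x hxt
      have h3 : β / x ≤ 2 / V x * (r + d * (x - T)) := by
        rw [div_le_iff₀ hx0]
        have := hrate x hx
        rw [div_mul_eq_mul_div, div_mul_eq_mul_div, le_div_iff₀ hVx]
        exact this
      have h4 : q' p x ≤ -(β / x * q p x) := by
        nlinarith [mul_le_mul_of_nonneg_right h3 h2]
      have h5 : x ^ (β - 1) = x ^ β / x := Real.rpow_sub_one hx0.ne' β
      rw [h5]
      have h6 : 0 < x ^ β := by positivity
      have h7 : q' p x * x ^ β + q p x * (β * (x ^ β / x))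
          = (q' p x + β / x * q p x) * x ^ β := by ring
      rw [h7]
      exact mul_nonpos_of_nonpos_of_nonneg (by linarith) h6.le
    · gcongr
      exact hqB _ (by linarith) p
  have ht0 : 0 < t := by linarith
  have := key t ht
  rw [Real.rpow_neg ht0.le, ← div_eq_mul_inv, le_div_iff₀ (by positivity)]
  exact this

/-- The decay `|p|² = O(t ^ (-6/5))`. The exponent only matters through being larger than `1`. -/
theorem exists_fast_decay (h : ReducedSystem t₀ m N V y e s q q' L) :
    ∃ C ≥ 0, ∃ T ≥ t₀, 1 ≤ T ∧ ∀ t ≥ T, ∀ p, q p t ≤ C * t ^ (-(6 / 5) : ℝ) := by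
  have hm := h.m_pos
  obtain ⟨B, hB, hqB⟩ := h.exists_q_le
  have hβ : 0 < m ^ 2 / (m ^ 2 + B) := by positivity
  obtain ⟨C, hC, T, hT, hq⟩ := h.exists_decay (T := max t₀ 1) (le_max_left _ _) (le_max_right _ _)
    hB (fun t ht => hqB t ((le_max_left _ _).trans ht))
    (show m ^ 2 / (m ^ 2 + B) < _ by linarith) hβ
  have htend : Filter.Tendsto (fun t : ℝ => C * t ^ (-(m ^ 2 / (m ^ 2 + B)))) Filter.atTop
      (nhds (C * 0)) := (tendsto_rpow_neg_atTop hβ).const_mul C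
  rw [mul_zero] at htend
  -- Once `|p|² ≤ m² / 10`, the available exponents reach `40/33 > 6/5`.
  have hev := htend.eventually_le_const (show (0 : ℝ) < m ^ 2 / 10 by positivity)
  obtain ⟨T₁, hT₁⟩ := Filter.eventually_atTop.1 hev
  have hTT : max t₀ 1 ≤ max T T₁ := hT.le.trans (le_max_left _ _)
  obtain ⟨C', hC', T', hT', hq'⟩ := h.exists_decay (T := max T T₁) (B := m ^ 2 / 10) (β := 6 / 5)
    ((le_max_left _ _).trans hTT) ((le_max_right _ _).trans hTT) (by positivity)
    (fun t ht p => (hq t ((le_max_left _ _).trans ht) p).trans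
      (hT₁ t ((le_max_right _ _).trans ht)))
    (by
      have : m ^ 2 / (m ^ 2 + m ^ 2 / 10) = 10 / 11 := by field_simp; norm_num
      rw [this]; norm_num) (by norm_num)
  exact ⟨C', hC', T', ((le_max_left _ _).trans hTT).trans hT', ((le_max_right _ _).trans hTT).trans hT',
    hq'⟩

/-- `H = -y / V`, and `y' = 12π m N + O(t ^ (-6/5))` is integrated twice. -/
theorem late_time (h : ReducedSystem t₀ m N V y e s q q' L) :
    ∃ C > 0, ∃ T ≥ t₀, ∀ t ≥ T, |t * (-(y t / V t)) + 2| ≤ C * t⁻¹ := by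
  have hm := h.m_pos
  have hN := h.N_pos
  have hpi := Real.pi_pos
  obtain ⟨C, hC, T, hT, hT1, hq⟩ := h.exists_fast_decay
  have hsub : Set.Ici T ⊆ Set.Ici t₀ := Set.Ici_subset_Ici.2 hT
  set α := 12 * Real.pi * (m * N) with hα
  have hα0 : 0 < α := by positivity
  set D := 6 * Real.pi * (C / m * N) with hD
  have hD0 : 0 ≤ D := by positivity
  have hy' : ∀ t ≥ T, 4 * Real.pi * (3 * e t - s t) ≤ α + D * t ^ (-(6 / 5) : ℝ) ∧
      α - D * t ^ (-(6 / 5) : ℝ) ≤ 4 * Real.pi * (3 * e t - s t) := by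
    intro t ht
    have ht0 : 0 < t := by linarith
    have htt : t ≥ t₀ := hT.le.trans ht
    have hB : 0 ≤ C * t ^ (-(6 / 5) : ℝ) := by positivity
    have h1 := h.e_ge t htt
    have h2 := h.s_nonneg t htt
    have h3 := h.e_le_sqrt t htt _ hB (hq t ht)
    have h4 := h.s_le t htt _ hB (hq t ht)
    set X := t ^ (-(6 / 5) : ℝ)
    have h5 : √(m ^ 2 + C * X) ≤ m + C * X / (2 * m) := by
      apply Real.sqrt_le_iff.2 ⟨by positivity, ?_⟩
      have : (m + C * X / (2 * m)) ^ 2 = m ^ 2 + C * X + (C * X / (2 * m)) ^ 2 := by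
        field_simp; ring
      rw [this]
      nlinarith [sq_nonneg (C * X / (2 * m))]
    have h6 : e t ≤ m * N + C * X / (2 * m) * N := by
      have := mul_le_mul_of_nonneg_right h5 hN.le
      linarith
    have e1 : D * X = 12 * Real.pi * (C * X / (2 * m) * N) := by rw [hD]; field_simp; ring
    have e2 : D * X = 6 * Real.pi * (C * X / m * N) := by rw [hD]; ring
    constructor
    · rw [e1, hα]; nlinarith
    · rw [e2, hα]
      have : 0 ≤ C * X / m * N := by positivity
      nlinarith
  have hphi : ∀ t ≥ T, HasDerivAt (fun x : ℝ => -5 * D * x ^ (-(1 / 5) : ℝ))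
      (D * t ^ (-(6 / 5) : ℝ)) t := by
    intro t ht
    have ht0 : 0 < t := by linarith
    refine ((Real.hasDerivAt_rpow_const (p := -(1 / 5)) (Or.inl ht0.ne')).const_mul
      (-5 * D)).congr_deriv ?_
    have : (-(1 / 5) - 1 : ℝ) = -(6 / 5) := by norm_num
    rw [this]; ring
  have hphib : ∀ t ≥ T, 0 ≤ D * t ^ (-(1 / 5) : ℝ) ∧ D * t ^ (-(1 / 5) : ℝ) ≤ D := by
    intro t ht
    have ht0 : 0 < t := by linarith
    exact ⟨by positivity, mul_le_of_le_one_right hD0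
      (Real.rpow_le_one_of_one_le_of_nonpos (by linarith) (by norm_num))⟩
  have hlin : ∀ t : ℝ, HasDerivAt (fun x : ℝ => α * x) α t := fun t => by
    simpa using (hasDerivAt_id t).const_mul α
  set K := |y T - α * T| + 5 * D with hK
  have hyu : ∀ t ≥ T, y t ≤ α * t + K := by
    have := le_of_derivWithin_le (a := T) (f := y)
      (h := fun x => (|y T - α * T| + 5 * D * T ^ (-(1 / 5) : ℝ)) +
        (α * x + -5 * D * x ^ (-(1 / 5) : ℝ)))
      (fun t ht => (h.deriv_y t (hT.trans ht)).mono hsub)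
      (fun t ht => (((hlin t).add (hphi t ht)).const_add _).hasDerivWithinAt)
      (fun t ht => (hy' t ht).1)
      (by linarith [le_abs_self (y T - α * T)])
    intro t ht
    have h1 := this t ht
    have h2 := hphib t ht
    have h3 := hphib T le_rfl
    rw [hK]; linarith
  have hyl : ∀ t ≥ T, α * t - K ≤ y t := by
    have := le_of_derivWithin_le (a := T) (h := y)
      (f := fun x => (-|y T - α * T| - 5 * D * T ^ (-(1 / 5) : ℝ)) +
        (α * x - -5 * D * x ^ (-(1 / 5) : ℝ)))
      (fun t ht => (((hlin t).sub (hphi t ht)).const_add _).hasDerivWithinAt)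
      (fun t ht => (h.deriv_y t (hT.trans ht)).mono hsub)
      (fun t ht => (hy' t ht).2)
      (by linarith [neg_abs_le (y T - α * T)])
    intro t ht
    have h1 := this t ht
    have h2 := hphib t ht
    have h3 := hphib T le_rfl
    rw [hK]; linarith
  have hK0 : 0 ≤ K := by positivity
  have hquad : ∀ t : ℝ, HasDerivAt (fun x : ℝ => α / 2 * x ^ 2) (α * t) t := fun t =>
    (((hasDerivAt_id t).pow 2).const_mul (α / 2)).congr_deriv (by simp; ring)
  have hKlin : ∀ t : ℝ, HasDerivAt (fun x : ℝ => K * x) K t := fun t => by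
    simpa using (hasDerivAt_id t).const_mul K
  set M := |V T - α / 2 * T ^ 2| with hM
  have hM0 : 0 ≤ M := abs_nonneg _
  have hVu : ∀ t ≥ T, V t ≤ α / 2 * t ^ 2 + (M + K) * t := by
    have := le_of_derivWithin_le (a := T) (f := V) (h := fun x => M + (α / 2 * x ^ 2 + K * x))
      (fun t ht => (h.deriv_V t (hT.trans ht)).mono hsub)
      (fun t ht => (((hquad t).add (hKlin t)).const_add _).hasDerivWithinAt) hyu
      (by nlinarith [le_abs_self (V T - α / 2 * T ^ 2)])
    intro t ht
    have h1 := this t ht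
    nlinarith
  have hVl : ∀ t ≥ T, α / 2 * t ^ 2 - (M + K) * t ≤ V t := by
    have := le_of_derivWithin_le (a := T) (h := V) (f := fun x => -M + (α / 2 * x ^ 2 - K * x))
      (fun t ht => (((hquad t).sub (hKlin t)).const_add _).hasDerivWithinAt)
      (fun t ht => (h.deriv_V t (hT.trans ht)).mono hsub) hyl
      (by nlinarith [neg_abs_le (V T - α / 2 * T ^ 2)])
    intro t ht
    have h1 := this t ht
    nlinarith
  refine ⟨4 * (2 * (M + K) + K) / α + 1, by positivity, max T (4 * (M + K) / α),
    hT.le.trans (le_max_left _ _), fun t ht => ?_⟩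
  have htT : t ≥ T := (le_max_left _ _).trans ht
  have ht2 : 4 * (M + K) / α ≤ t := (le_max_right _ _).trans ht
  have ht0 : 0 < t := by linarith
  have hVpos := h.V_pos t (hT.le.trans htT)
  rw [div_le_iff₀ hα0] at ht2
  have hVq : α / 4 * t ^ 2 ≤ V t := by
    have := hVl t htT
    nlinarith
  have hnum : |2 * V t - t * y t| ≤ (2 * (M + K) + K) * t := by
    have h1 := hVl t htT
    have h2 := hVu t htT
    have h3 := mul_le_mul_of_nonneg_left (hyl t htT) ht0.le
    have h4 := mul_le_mul_of_nonneg_left (hyu t htT) ht0.le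
    rw [abs_le]
    constructor <;> nlinarith
  have e1 : t * (-(y t / V t)) + 2 = (2 * V t - t * y t) / V t := by
    field_simp; ring
  rw [e1, abs_div, abs_of_pos hVpos]
  calc |2 * V t - t * y t| / V t ≤ (2 * (M + K) + K) * t / (α / 4 * t ^ 2) := by
        gcongr
    _ = 4 * (2 * (M + K) + K) / α * t⁻¹ := by field_simp
    _ ≤ (4 * (2 * (M + K) + K) / α + 1) * t⁻¹ := by
        gcongr
        linarith

end ReducedSystem

/-! ### From the Einstein–Vlasov system to the reduced system -/

namespace BianchiIVlasov

variable {t₀ m : ℝ} {g k : ℝ → Matrix (Fin 3) (Fin 3) ℝ} {f₀ : (Fin 3 → ℝ) → ℝ}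

theorem det_pos (h : BianchiIVlasov t₀ m g k f₀) {t : ℝ} (ht : t ≥ t₀) : 0 < (g t).det :=
  (h.g_posdef t ht).det_pos

theorem hasDerivWithinAt_inv (h : BianchiIVlasov t₀ m g k f₀) {t : ℝ} (ht : t ≥ t₀) :
    HasDerivWithinAt (fun x => (g x)⁻¹) ((2 : ℝ) • ((g t)⁻¹ * k t * (g t)⁻¹)) (Set.Ici t₀) t := by
  have := (h.evol_g t ht).matrixInv ht fun x hx => (h.det_pos hx).ne'
  refine this.congr_deriv ?_
  simp

theorem hasDerivWithinAt_vol (h : BianchiIVlasov t₀ m g k f₀) {t : ℝ} (ht : t ≥ t₀) :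
    HasDerivWithinAt (fun x => √(g x).det) (-(meanCurv (g t) (k t)) * √(g t).det)
      (Set.Ici t₀) t := by
  have hd := h.det_pos ht
  refine ((h.evol_g t ht).matrixDet hd.ne' |>.sqrt hd.ne').congr_deriv ?_
  have hs : √(g t).det ≠ 0 := (Real.sqrt_pos.2 hd).ne'
  rw [div_eq_iff (by positivity)]
  simp only [Matrix.mul_smul, Matrix.trace_smul, smul_eq_mul, meanCurv]
  have := Real.mul_self_sqrt hd.le
  linear_combination 2 * ((g t)⁻¹ * k t).trace * this

theorem hasDerivWithinAt_meanCurv (h : BianchiIVlasov t₀ m g k f₀) {t : ℝ} (ht : t ≥ t₀) :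
    HasDerivWithinAt (fun x => meanCurv (g x) (k x))
      (meanCurv (g t) (k t) ^ 2 + 4 * Real.pi * ((g t)⁻¹ * stress m f₀ (g t)).trace
        - 12 * Real.pi * energyDensity m f₀ (g t)) (Set.Ici t₀) t := by
  have hu : IsUnit (g t).det := (h.det_pos ht).ne'.isUnit
  refine ((h.hasDerivWithinAt_inv ht).matrixMul (h.evol_k t ht)).matrixTrace.congr_deriv ?_
  simp only [Matrix.mul_sub, Matrix.mul_smul, Matrix.smul_mul, Matrix.trace_add, Matrix.trace_sub,
    Matrix.trace_smul, smul_eq_mul, Matrix.nonsing_inv_mul _ hu, Matrix.trace_one,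
    Fintype.card_fin, ← Matrix.mul_assoc, meanCurv]
  push_cast
  ring

theorem hasDerivWithinAt_scaledCurv (h : BianchiIVlasov t₀ m g k f₀) {t : ℝ} (ht : t ≥ t₀) :
    HasDerivWithinAt (fun x => -(meanCurv (g x) (k x)) * √(g x).det)
      (4 * Real.pi * (3 * totalEnergy m f₀ (g t) - totalStress m f₀ (g t))) (Set.Ici t₀) t := by
  refine ((h.hasDerivWithinAt_meanCurv ht).fun_neg.mul (h.hasDerivWithinAt_vol ht)).congr_deriv ?_
  have hs : √(g t).det ≠ 0 := (Real.sqrt_pos.2 (h.det_pos ht)).ne'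
  rw [energyDensity_eq, trace_inv_mul_stress h.m_pos h.f₀_smooth.continuous h.f₀_cpt
    (h.g_posdef t ht)]
  field_simp
  ring

theorem hasDerivWithinAt_metricQuad (h : BianchiIVlasov t₀ m g k f₀) {t : ℝ} (ht : t ≥ t₀)
    (v : Fin 3 → ℝ) :
    HasDerivWithinAt (fun x => v ⬝ᵥ (g x).mulVec v) (-2 * (v ⬝ᵥ (k t).mulVec v))
      (Set.Ici t₀) t := by
  refine ((h.evol_g t ht).matrixQuad v).congr_deriv ?_
  rw [Matrix.smul_mulVec, dotProduct_smul, smul_eq_mul]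

theorem hasDerivWithinAt_curvQuad (h : BianchiIVlasov t₀ m g k f₀) {t : ℝ} (ht : t ≥ t₀)
    (v : Fin 3 → ℝ) :
    HasDerivWithinAt (fun x => -√(g x).det * (v ⬝ᵥ (k x).mulVec v))
      (√(g t).det * (2 * ((k t).mulVec v ⬝ᵥ (g t)⁻¹.mulVec ((k t).mulVec v))
          + 8 * Real.pi * (v ⬝ᵥ (stress m f₀ (g t)).mulVec v))
        + 4 * Real.pi * (totalEnergy m f₀ (g t) - totalStress m f₀ (g t))
          * (v ⬝ᵥ (g t).mulVec v)) (Set.Ici t₀) t := by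
  refine ((h.hasDerivWithinAt_vol ht).fun_neg.mul ((h.evol_k t ht).matrixQuad v)).congr_deriv ?_
  have hs : √(g t).det ≠ 0 := (Real.sqrt_pos.2 (h.det_pos ht)).ne'
  have e1 : v ⬝ᵥ (k t * (g t)⁻¹ * k t).mulVec v
      = (k t).mulVec v ⬝ᵥ (g t)⁻¹.mulVec ((k t).mulVec v) := by
    rw [← Matrix.mulVec_mulVec, ← Matrix.mulVec_mulVec, Matrix.dotProduct_mulVec,
      ← Matrix.mulVec_transpose, (h.k_symm t ht).eq]
  simp only [Matrix.sub_mulVec, Matrix.smul_mulVec, dotProduct_sub, dotProduct_smul, smul_eq_mul,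
    e1, energyDensity_eq, trace_inv_mul_stress h.m_pos h.f₀_smooth.continuous h.f₀_cpt
    (h.g_posdef t ht)]
  field_simp
  ring

/-- The Rayleigh quotients of `-V k` with respect to `g` grow at least at the rate `4π V (ρ - tr S)`:
by the Cauchy–Schwarz inequality the terms quadratic in `k` have a favourable sign. -/
theorem rayleigh_grow (h : BianchiIVlasov t₀ m g k f₀) {T r d : ℝ} (hT : T ≥ t₀)
    (hr : ∀ v, r * (v ⬝ᵥ (g T).mulVec v) ≤ -√(g T).det * (v ⬝ᵥ (k T).mulVec v))
    (hd : ∀ t ≥ T, d ≤ 4 * Real.pi * (totalEnergy m f₀ (g t) - totalStress m f₀ (g t)))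
    {t : ℝ} (ht : t ≥ T) (v : Fin 3 → ℝ) :
    (r + d * (t - T)) * (v ⬝ᵥ (g t).mulVec v) ≤ -√(g t).det * (v ⬝ᵥ (k t).mulVec v) := by
  by_cases hv : v = 0
  · simp [hv]
  have hG : ∀ x ≥ T, 0 < v ⬝ᵥ (g x).mulVec v := fun x hx => by
    simpa using (h.g_posdef x (hT.le.trans hx)).dotProduct_mulVec_pos hv
  rw [← le_div_iff₀ (hG t ht)]
  have hsub : Set.Ici T ⊆ Set.Ici t₀ := Set.Ici_subset_Ici.2 hT
  refine le_of_derivWithin_le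
    (h := fun x => -√(g x).det * (v ⬝ᵥ (k x).mulVec v) / (v ⬝ᵥ (g x).mulVec v)) (f := fun t => r + d * (t - T)) (f' := fun _ => d)
    (fun t _ => ?_)
    (fun t ht => (((h.hasDerivWithinAt_curvQuad (hT.le.trans ht) v).div
      (h.hasDerivWithinAt_metricQuad (hT.le.trans ht) v) (hG t ht).ne').mono hsub))
    (fun t ht => ?_) ?_ t ht
  · exact ((((hasDerivAt_id t).sub_const T).const_mul d).const_add
      r).hasDerivWithinAt.congr_deriv (by simp)
  · have htt : t ≥ t₀ := hT.le.trans ht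
    have hgp := h.g_posdef t htt
    have hGt := hG t ht
    have hV := Real.sqrt_pos.2 (h.det_pos htt)
    have hCS := dotProduct_sq_le_inv_mul hgp (h.g_symm t htt) ((k t).mulVec v) v
    rw [dotProduct_comm ((k t).mulVec v) v] at hCS
    have hS := stress_quad_nonneg h.m_pos h.f₀_smooth.continuous h.f₀_cpt h.f₀_nonneg hgp v
    refine (hd t ht).trans ?_
    rw [le_div_iff₀ (by positivity)]
    have h1 := mul_le_mul_of_nonneg_left hCS hV.le
    have h2 : 0 ≤ √(g t).det * (8 * Real.pi * (v ⬝ᵥ (stress m f₀ (g t)).mulVec v))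
        * (v ⬝ᵥ (g t).mulVec v) := by have := Real.pi_pos; positivity
    nlinarith
  · simpa using (le_div_iff₀ (hG T le_rfl)).2 (hr v)

theorem exists_rayleigh_bound (h : BianchiIVlasov t₀ m g k f₀) :
    ∃ r, ∀ v, r * (v ⬝ᵥ (g t₀).mulVec v) ≤ -√(g t₀).det * (v ⬝ᵥ (k t₀).mulVec v) := by
  have hG : ∀ v : Fin 3 → ℝ, v ≠ 0 → 0 < v ⬝ᵥ (g t₀).mulVec v := fun v hv => by
    simpa using (h.g_posdef t₀ le_rfl).dotProduct_mulVec_pos hv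
  have hne : ∀ v ∈ Metric.sphere (0 : Fin 3 → ℝ) 1, v ≠ 0 := by
    rintro v hv rfl
    simp at hv
  have hcont : ContinuousOn (fun v : Fin 3 → ℝ =>
      (-√(g t₀).det * (v ⬝ᵥ (k t₀).mulVec v)) / (v ⬝ᵥ (g t₀).mulVec v))
      (Metric.sphere (0 : Fin 3 → ℝ) 1) :=
    ((continuous_quad _).const_mul _).continuousOn.div (continuous_quad _).continuousOn
      fun v hv => (hG v (hne v hv)).ne'
  obtain ⟨r, hr⟩ := (isCompact_sphere _ _).bddBelow_image hcont
  refine ⟨r, fun v => ?_⟩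
  by_cases hv : v = 0
  · simp [hv]
  have hnv : 0 < ‖v‖ := norm_pos_iff.2 hv
  have h1 := hr (Set.mem_image_of_mem _ (show ‖v‖⁻¹ • v ∈ Metric.sphere (0 : Fin 3 → ℝ) 1 by
    rw [mem_sphere_zero_iff_norm, norm_smul, norm_inv, norm_norm, inv_mul_cancel₀ hnv.ne']))
  have hGv := hG v hv
  simp only [Matrix.mulVec_smul, dotProduct_smul, smul_dotProduct, smul_eq_mul] at h1
  rw [← le_div_iff₀ hGv]
  refine h1.trans_eq ?_
  field_simp

theorem momentum_deriv_eq (h : BianchiIVlasov t₀ m g k f₀) {t : ℝ} (ht : t ≥ t₀)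
    (p : Fin 3 → ℝ) :
    p ⬝ᵥ ((2 : ℝ) • ((g t)⁻¹ * k t * (g t)⁻¹)).mulVec p
      = 2 * ((g t)⁻¹.mulVec p ⬝ᵥ (k t).mulVec ((g t)⁻¹.mulVec p)) := by
  have hsymm : ((g t)⁻¹)ᵀ = (g t)⁻¹ := by
    rw [Matrix.transpose_nonsing_inv, (h.g_symm t ht).eq]
  rw [Matrix.smul_mulVec, dotProduct_smul, smul_eq_mul, ← Matrix.mulVec_mulVec,
    ← Matrix.mulVec_mulVec, Matrix.dotProduct_mulVec, ← Matrix.mulVec_transpose, hsymm]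

theorem reducedSystem (h : BianchiIVlasov t₀ m g k f₀) (hexp : meanCurv (g t₀) (k t₀) < 0)
    (hf₀ : f₀ ≠ 0) :
    ReducedSystem t₀ m (∫ p, f₀ p) (fun t => √(g t).det)
      (fun t => -(meanCurv (g t) (k t)) * √(g t).det)
      (fun t => totalEnergy m f₀ (g t)) (fun t => totalStress m f₀ (g t))
      (fun (p : {p : Fin 3 → ℝ // f₀ p ≠ 0}) t => p.1 ⬝ᵥ (g t)⁻¹.mulVec p.1)
      (fun p t => p.1 ⬝ᵥ ((2 : ℝ) • ((g t)⁻¹ * k t * (g t)⁻¹)).mulVec p.1)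
      (fun t r => ∀ v, r * (v ⬝ᵥ (g t).mulVec v) ≤ -√(g t).det * (v ⬝ᵥ (k t).mulVec v)) where
  m_pos := h.m_pos
  N_pos := by
    obtain ⟨p, hp⟩ := Function.ne_iff.1 hf₀
    exact h.f₀_smooth.continuous.integral_pos_of_hasCompactSupport_nonneg_nonzero h.f₀_cpt
      h.f₀_nonneg hp
  V_pos t ht := Real.sqrt_pos.2 (h.det_pos ht)
  y_pos := mul_pos (neg_pos.2 hexp) (Real.sqrt_pos.2 (h.det_pos le_rfl))
  deriv_V t ht := h.hasDerivWithinAt_vol ht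
  deriv_y t ht := h.hasDerivWithinAt_scaledCurv ht
  deriv_q p t ht := (h.hasDerivWithinAt_inv ht).matrixQuad p.1
  q_nonneg p t ht := quad_inv_nonneg (h.g_posdef t ht) p.1
  q_bdd := by
    obtain ⟨B, hB⟩ := h.f₀_cpt.isCompact.bddAbove_image (continuous_quad (g t₀)⁻¹).continuousOn
    refine ⟨max B 0, le_max_right _ _, fun p => le_max_of_le_left ?_⟩
    exact hB (Set.mem_image_of_mem _ (subset_tsupport _ p.2))
  e_ge t ht := mul_le_totalEnergy h.m_pos h.f₀_smooth.continuous h.f₀_cpt h.f₀_nonneg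
    (h.g_posdef t ht)
  s_nonneg t ht := totalStress_nonneg h.f₀_nonneg (h.g_posdef t ht)
  s_le_e t ht := totalStress_le_totalEnergy h.m_pos h.f₀_smooth.continuous h.f₀_cpt h.f₀_nonneg
    (h.g_posdef t ht)
  e_le_sqrt t _ B _ hB := totalEnergy_le h.f₀_smooth.continuous h.f₀_cpt h.f₀_nonneg
    fun p hp => hB ⟨p, hp⟩
  sub_ge t ht B _ hB := le_totalEnergy_sub h.m_pos h.f₀_smooth.continuous h.f₀_cpt h.f₀_nonneg
    (h.g_posdef t ht) fun p hp => hB ⟨p, hp⟩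
  s_le t ht B _ hB := totalStress_le h.m_pos h.f₀_smooth.continuous h.f₀_cpt h.f₀_nonneg
    (h.g_posdef t ht) fun p hp => hB ⟨p, hp⟩
  L_init := h.exists_rayleigh_bound
  L_grow T hT r d hr hd t ht v := h.rayleigh_grow hT hr hd ht v
  q'_le p t ht r hr := by
    have hu : IsUnit (g t).det := (h.det_pos ht).ne'.isUnit
    have hV := Real.sqrt_pos.2 (h.det_pos ht)
    -- The quadratic forms are compared on the velocity `v = g⁻¹ p`, for which `g(v, v) = |p|²`.
    have h1 := hr ((g t)⁻¹.mulVec p.1)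
    rw [Matrix.mulVec_mulVec _ (g t), Matrix.mul_nonsing_inv _ hu, Matrix.one_mulVec,
      dotProduct_comm _ p.1] at h1
    rw [h.momentum_deriv_eq ht]
    set K := (g t)⁻¹.mulVec p.1 ⬝ᵥ (k t).mulVec ((g t)⁻¹.mulVec p.1)
    set Q := p.1 ⬝ᵥ (g t)⁻¹.mulVec p.1
    have h2 : 2 / √(g t).det * r * Q ≤ -(2 * K) := by
      calc 2 / √(g t).det * r * Q = 2 / √(g t).det * (r * Q) := by ring
        _ ≤ 2 / √(g t).det * (-√(g t).det * K) := by gcongr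
        _ = -(2 * K) := by field_simp
    linarith

end BianchiIVlasov

/-- **Late-time behaviour of the mean curvature.**
For a smooth expanding solution of the Bianchi I Einstein–Vlasov system with `f₀` not
identically zero, if the initial anisotropy `F(t₀)` and the initial momentum supremum
`P(t₀)` are sufficiently small, then `H(t) = -2 t⁻¹ (1 + O(t⁻¹))` as `t → ∞`. -/
theorem meanCurv_late_time (t₀ m : ℝ) (g k : ℝ → Matrix (Fin 3) (Fin 3) ℝ)
    (f₀ : (Fin 3 → ℝ) → ℝ) (hsol : BianchiIVlasov t₀ m g k f₀)
    (hexp : meanCurv (g t₀) (k t₀) < 0) (hf₀ : f₀ ≠ 0) :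
    ∃ ε₀ > (0 : ℝ), ∃ C > (0 : ℝ),
      anisotropy (g t₀) (k t₀) ≤ ε₀ → momentumSup f₀ (g t₀) ≤ ε₀ →
        ∃ T ≥ t₀, ∀ t ≥ T, |t * meanCurv (g t) (k t) + 2| ≤ C * t⁻¹ := by
  -- No smallness is needed: the conclusion holds for every solution, so `ε₀ = 1` will do.
  obtain ⟨C, hC, T, hT, hlate⟩ := (hsol.reducedSystem hexp hf₀).late_time
  refine ⟨1, one_pos, C, hC, fun _ _ => ⟨T, hT, fun t ht => ?_⟩⟩
  have hV : √(g t).det ≠ 0 := (Real.sqrt_pos.2 (hsol.det_pos (hT.le.trans ht))).ne'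
  have := hlate t ht
  rwa [mul_div_cancel_right₀ _ hV, neg_neg] at this
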